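/- arXiv:2502.08905 — 2 statements merged into one kernel-verified Lean document; each statement's English description precedes it below -/
import Mathlib

section
/- Let A and B be n×n Hermitian complex matrices, and let the eigenvalues of A, B, and A+B be arranged in ascending order as λ_1 ≤ λ_2 ≤ … ≤ λ_n. Then for every index i ∈ {1,…,n} and every j ∈ {0,1,…,n−i}, one has λ_i(A+B) ≤ λ_{i+j}(A) + λ_{n−j}(B). -/
/-- The eigenvalues of a Hermitian matrix, arranged in ascending order
(`sortedEigenvalues hA k` is the `(k+1)`-st smallest eigenvalue of `A`). -/
noncomputable def sortedEigenvalues {n : ℕ} {A : Matrix (Fin n) (Fin n) ℂ}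
    (hA : A.IsHermitian) : Fin n → ℝ :=
  hA.eigenvalues ∘ Tuple.sort hA.eigenvalues

/-- An orthonormal eigenvector basis of a Hermitian matrix, ordered by ascending eigenvalues. -/
noncomputable def sortedEigenvectorBasis {n : ℕ} {A : Matrix (Fin n) (Fin n) ℂ}
    (hA : A.IsHermitian) : OrthonormalBasis (Fin n) ℂ (EuclideanSpace ℂ (Fin n)) :=
  hA.eigenvectorBasis.reindex (Tuple.sort hA.eigenvalues).symm

theorem sortedEigenvalues_monotone {n : ℕ} {A : Matrix (Fin n) (Fin n) ℂ}
    (hA : A.IsHermitian) : Monotone (sortedEigenvalues hA) :=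
  Tuple.monotone_sort _

theorem toEuclideanLin_sortedEigenvectorBasis {n : ℕ} {A : Matrix (Fin n) (Fin n) ℂ}
    (hA : A.IsHermitian) (k : Fin n) :
    Matrix.toEuclideanLin A (sortedEigenvectorBasis hA k) =
      (sortedEigenvalues hA k : ℂ) • sortedEigenvectorBasis hA k := by
  apply WithLp.ofLp_injective
  simpa [sortedEigenvectorBasis, sortedEigenvalues, Matrix.toLpLin_apply] using
    hA.mulVec_eigenvectorBasis (Tuple.sort hA.eigenvalues k)

/-- The quadratic form of a Hermitian matrix in terms of its spectral decomposition. -/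
theorem re_inner_toEuclideanLin_eq_sum {n : ℕ} {A : Matrix (Fin n) (Fin n) ℂ}
    (hA : A.IsHermitian) (x : EuclideanSpace ℂ (Fin n)) :
    (inner ℂ x (Matrix.toEuclideanLin A x)).re =
      ∑ k, sortedEigenvalues hA k * ‖inner ℂ (sortedEigenvectorBasis hA k) x‖ ^ 2 := by
  have hsymm := Matrix.isSymmetric_toEuclideanLin_iff.mpr hA
  rw [← (sortedEigenvectorBasis hA).sum_inner_mul_inner, Complex.re_sum]
  refine Finset.sum_congr rfl fun k _ => ?_
  rw [← hsymm, toEuclideanLin_sortedEigenvectorBasis, inner_smul_left, Complex.conj_ofReal,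
    mul_left_comm, Complex.re_ofReal_mul, ← RCLike.re_eq_complex_re, inner_mul_symm_re_eq_norm,
    norm_mul, norm_inner_symm, ← sq]

theorem re_inner_toEuclideanLin_le {n : ℕ} {A : Matrix (Fin n) (Fin n) ℂ}
    (hA : A.IsHermitian) (m : Fin n) {x : EuclideanSpace ℂ (Fin n)}
    (hx : ∀ k, m < k → inner ℂ (sortedEigenvectorBasis hA k) x = 0) :
    (inner ℂ x (Matrix.toEuclideanLin A x)).re ≤ sortedEigenvalues hA m * ‖x‖ ^ 2 := by
  rw [re_inner_toEuclideanLin_eq_sum hA,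
    ← (sortedEigenvectorBasis hA).sum_sq_norm_inner_right, Finset.mul_sum]
  refine Finset.sum_le_sum fun k _ => ?_
  rcases le_or_gt k m with hk | hk
  · gcongr
    exact sortedEigenvalues_monotone hA hk
  · simp [hx k hk]

theorem le_re_inner_toEuclideanLin {n : ℕ} {A : Matrix (Fin n) (Fin n) ℂ}
    (hA : A.IsHermitian) (m : Fin n) {x : EuclideanSpace ℂ (Fin n)}
    (hx : ∀ k, k < m → inner ℂ (sortedEigenvectorBasis hA k) x = 0) :
    sortedEigenvalues hA m * ‖x‖ ^ 2 ≤ (inner ℂ x (Matrix.toEuclideanLin A x)).re := by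
  rw [re_inner_toEuclideanLin_eq_sum hA,
    ← (sortedEigenvectorBasis hA).sum_sq_norm_inner_right, Finset.mul_sum]
  refine Finset.sum_le_sum fun k _ => ?_
  rcases le_or_gt m k with hk | hk
  · gcongr
    exact sortedEigenvalues_monotone hA hk
  · simp [hx k hk]

/-- Fewer vectors than the dimension admit a common nonzero orthogonal vector. -/
theorem exists_ne_zero_forall_inner_eq_zero {𝕜 E : Type*} [RCLike 𝕜] [NormedAddCommGroup E]
    [InnerProductSpace 𝕜 E] [FiniteDimensional 𝕜 E] (s : Finset E)
    (hs : s.card < Module.finrank 𝕜 E) : ∃ x : E, x ≠ 0 ∧ ∀ v ∈ s, inner 𝕜 v x = 0 := by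
  have hne : (Submodule.span 𝕜 (s : Set E))ᗮ ≠ ⊥ := by
    intro h
    rw [Submodule.orthogonal_eq_bot_iff] at h
    have hle := finrank_span_finset_le_card (R := 𝕜) s
    rw [Set.finrank, h, finrank_top] at hle
    omega
  obtain ⟨x, hx, hx0⟩ := Submodule.exists_mem_ne_zero_of_ne_bot hne
  exact ⟨x, hx0, fun v hv =>
    (Submodule.mem_orthogonal _ x).mp hx v (Submodule.subset_span hv)⟩

/-- Weyl's inequality (upper bound): for Hermitian `A, B` and `1 ≤ i ≤ n`, `0 ≤ j ≤ n - i`,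
`λ_i(A+B) ≤ λ_{i+j}(A) + λ_{n-j}(B)` (eigenvalues in ascending order, 1-based indices). -/
theorem weyl_inequality_upper {n : ℕ} (A B : Matrix (Fin n) (Fin n) ℂ)
    (hA : A.IsHermitian) (hB : B.IsHermitian)
    (i j : ℕ) (hi1 : 1 ≤ i) (hin : i ≤ n) (hj : j ≤ n - i) :
    sortedEigenvalues (hA.add hB) ⟨i - 1, by omega⟩ ≤
      sortedEigenvalues hA ⟨i + j - 1, by omega⟩ +
        sortedEigenvalues hB ⟨n - j - 1, by omega⟩ := by
  classical
  set p : Fin n := ⟨i - 1, by omega⟩ with hp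
  set q : Fin n := ⟨i + j - 1, by omega⟩ with hq
  set r : Fin n := ⟨n - j - 1, by omega⟩ with hr
  obtain ⟨x, hx0, hx⟩ := exists_ne_zero_forall_inner_eq_zero (𝕜 := ℂ)
    ((Finset.Iio p).image (sortedEigenvectorBasis (hA.add hB)) ∪
      ((Finset.Ioi q).image (sortedEigenvectorBasis hA) ∪
        (Finset.Ioi r).image (sortedEigenvectorBasis hB))) (by
      refine (Finset.card_union_le _ _).trans_lt ?_
      refine (add_le_add Finset.card_image_le ((Finset.card_union_le _ _).trans
        (add_le_add Finset.card_image_le Finset.card_image_le))).trans_lt ?_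
      simp only [Fin.card_Iio, Fin.card_Ioi, finrank_euclideanSpace, Fintype.card_fin, hp, hq, hr]
      omega)
  simp only [Finset.mem_union, Finset.mem_image, Finset.mem_Iio, Finset.mem_Ioi] at hx
  have hsum := le_re_inner_toEuclideanLin (hA.add hB) p
    fun k hk => hx _ (.inl ⟨k, hk, rfl⟩)
  have hleA := re_inner_toEuclideanLin_le hA q
    fun k hk => hx _ (.inr (.inl ⟨k, hk, rfl⟩))
  have hleB := re_inner_toEuclideanLin_le hB r
    fun k hk => hx _ (.inr (.inr ⟨k, hk, rfl⟩))
  rw [map_add, LinearMap.add_apply, inner_add_right, Complex.add_re] at hsum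
  refine le_of_mul_le_mul_right ?_ (pow_pos (norm_pos_iff.mpr hx0) 2)
  linarith
end

section
/- Let γ be the standard Gaussian measure on ℝ^d, let w₀ ∈ ℝ^d, and let x₁, …, x_n ∈ ℝ^d. Define the n×n real matrix H by H_{ij} = ⟨x_i, x_j⟩ · γ({w ∈ ℝ^d : ⟨w₀ + w, x_i⟩ ≥ 0 and ⟨w₀ + w, x_j⟩ ≥ 0}). Then H is symmetric positive semidefinite. -/
open Matrix MeasureTheory ProbabilityTheory

/-- The standard Gaussian measure on `ℝ^d`: the `d`-fold product of `N(0,1)`. -/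
noncomputable def stdGaussian (d : ℕ) : Measure (Fin d → ℝ) :=
  Measure.pi fun _ : Fin d => gaussianReal 0 1

instance isProbabilityMeasure_stdGaussian (d : ℕ) :
    IsProbabilityMeasure (_root_.stdGaussian d) :=
  inferInstanceAs (IsProbabilityMeasure (Measure.pi fun _ : Fin d => gaussianReal 0 1))

/-- Let `γ` be the standard Gaussian measure on `ℝ^d`, `w₀ ∈ ℝ^d`, and `x₁, …, x_n ∈ ℝ^d`.
The matrix `H` with `H i j = ⟨x i, x j⟩ · γ {w | ⟨w₀ + w, x i⟩ ≥ 0 ∧ ⟨w₀ + w, x j⟩ ≥ 0}`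
is symmetric positive semidefinite. -/
theorem gram_relu_posSemidef {d n : ℕ} (w₀ : Fin d → ℝ) (x : Fin n → Fin d → ℝ) :
    (Matrix.of fun i j : Fin n =>
      (x i ⬝ᵥ x j) *
        ((stdGaussian d)
          {w | 0 ≤ (w₀ + w) ⬝ᵥ x i ∧ 0 ≤ (w₀ + w) ⬝ᵥ x j}).toReal).PosSemidef := by
  have hgram : (Matrix.of x * (Matrix.of x)ᴴ).PosSemidef := posSemidef_self_mul_conjTranspose _
  have hmeas (i : Fin n) : MeasurableSet {w : Fin d → ℝ | 0 ≤ (w₀ + w) ⬝ᵥ x i} := by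
    refine measurableSet_le measurable_const ?_
    simp only [dotProduct]
    fun_prop
  exact hgram.hadamard (posSemidef_matrix_measure_inter (μ := _root_.stdGaussian d) hmeas)
end
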